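/- arXiv:1601.05622 — 3 statements merged into one kernel-verified Lean document; each statement's English description precedes it below -/
import Mathlib

section
/- Let (R,m) be a Noetherian local ring of dimension d≥1, let I_1,…,I_s be m-primary ideals and set I = I_1⋯I_s. Then Σ_{α∈ℕ^s, |α|=d} d!·e_α({I^n})/(α_1!⋯α_s!) = e_0(I) and e_{(0,…,0)}({I^n}) = e_d(I). -/
/-! Common definitions for multigraded filtrations of ideals
(following Sarkar–Verma, "Postulation and reduction vectors of
multigraded filtrations of ideals"). -/

open Finset IsLocalRing

/-- The vector `e = (1,…,1) ∈ ℤˢ`. -/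
def evec (s : ℕ) : Fin s → ℤ := fun _ => 1

/-- `n⁺`, the componentwise positive part of a vector. -/
def vplus {s : ℕ} (n : Fin s → ℤ) : Fin s → ℤ := fun i => max (n i) 0

/-- `I^n = I₁^{n₁} ⋯ I_s^{n_s}` with the convention `I_i^{n_i} = R` for `n_i ≤ 0`. -/
def prodPow {R : Type*} [CommRing R] {s : ℕ} (I : Fin s → Ideal R) (n : Fin s → ℤ) : Ideal R :=
  ∏ i, I i ^ (n i).toNat

/-- An ideal is `m`-primary iff it is proper and contains a power of the maximal ideal. -/
def IsMPrimary (R : Type*) [CommRing R] [IsLocalRing R] (I : Ideal R) : Prop :=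
  I ≠ ⊤ ∧ maximalIdeal R ≤ I.radical

/-- A Cohen–Macaulay local ring: some system of parameters (a regular sequence of
length equal to the Krull dimension inside the maximal ideal) exists. -/
def IsCMLocal (R : Type*) [CommRing R] [IsLocalRing R] : Prop :=
  ∃ rs : List R, (∀ x ∈ rs, x ∈ maximalIdeal R) ∧ RingTheory.Sequence.IsRegular R rs ∧
    (rs.length : WithBot ℕ∞) = ringKrullDim R

/-- A `ℤˢ`-graded `I`-admissible filtration of ideals.  Admissibility (finiteness of the
extended Rees ring `R'(F)` as a module over `R'(I)`) is recorded through the equivalent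
condition that `F(n + m) = I^n F(m)` for all `n ≥ 0`, for a suitable fixed `m ≥ 0`. -/
structure AdmissibleFiltration (R : Type*) [CommRing R] (s : ℕ) (I : Fin s → Ideal R) where
  F : (Fin s → ℤ) → Ideal R
  prodPow_le : ∀ n, prodPow I n ≤ F n
  mul_le : ∀ m n, F m * F n ≤ F (m + n)
  antitone : ∀ m n : Fin s → ℤ, m ≤ n → F n ≤ F m
  plus_eq : ∀ n, F n = F (vplus n)
  admissible : ∃ m : Fin s → ℤ, 0 ≤ m ∧
    ∀ n : Fin s → ℤ, 0 ≤ n → F (n + m) = prodPow I n * F m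

/-- The length `λ_R(M)` of a module, as an integer (the longest chain of submodules;
this is the usual length for modules of finite length). -/
noncomputable def lenI (R M : Type*) [CommRing R] [AddCommGroup M] [Module R M] : ℤ :=
  (((Order.krullDim (Submodule R M)).unbotD 0).toNat : ℤ)

/-- The Hilbert function `H_F(n) = λ(R/F(n))` of a filtration. -/
noncomputable def hilbFn {R : Type*} [CommRing R] {s : ℕ} {I : Fin s → Ideal R}
    (F : AdmissibleFiltration R s I) (n : Fin s → ℤ) : ℤ :=
  lenI R (R ⧸ F.F n)

/-- The multigraded Hilbert polynomial with coefficient data `c = (e_α)`: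
`P(n) = Σ_{|α| ≤ d} (−1)^{d−|α|} e_α ∏ᵢ binom(nᵢ+αᵢ−1, αᵢ)`. -/
noncomputable def hilbPoly (s d : ℕ) (c : (Fin s → ℕ) → ℤ) (n : Fin s → ℤ) : ℤ :=
  ∑ α ∈ Finset.univ.filter (fun α : Fin s → Fin (d+1) => (∑ i, (α i : ℕ)) ≤ d),
    (-1)^(d - ∑ i, (α i : ℕ)) * c (fun i => (α i : ℕ)) *
      ∏ i, Ring.choose (n i + ((α i : ℕ) : ℤ) - 1) (α i : ℕ)

/-- `c : (Fin s → ℕ) → ℤ` is the family of Hilbert coefficients of `F`: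
the corresponding polynomial agrees with the Hilbert function for all large `n`. -/
noncomputable def IsHilbCoeffs {R : Type*} [CommRing R] {s : ℕ} {I : Fin s → Ideal R}
    (F : AdmissibleFiltration R s I) (d : ℕ) (c : (Fin s → ℕ) → ℤ) : Prop :=
  ∃ N : ℕ, ∀ n : Fin s → ℤ, (∀ i, (N : ℤ) ≤ n i) → hilbPoly s d c n = hilbFn F n

/-- The Samuel polynomial `P_a(n) = Σ_{i=0}^{d} (−1)^i e_i binom(n+d−1−i, d−i)` with
coefficient data `c = (e_i)`. -/
noncomputable def samuelPoly (d : ℕ) (c : ℕ → ℤ) (n : ℤ) : ℤ :=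
  ∑ i ∈ Finset.range (d + 1), (-1)^i * c i * Ring.choose (n + (d : ℤ) - 1 - (i : ℤ)) (d - i)

/-- `c` is the family of Hilbert coefficients of the `m`-primary ideal `a`. -/
noncomputable def IsSamuelCoeffs {R : Type*} [CommRing R] (a : Ideal R) (d : ℕ)
    (c : ℕ → ℤ) : Prop :=
  ∃ N : ℕ, ∀ n : ℕ, N ≤ n → samuelPoly d c (n : ℤ) = lenI R (R ⧸ a ^ n)

section Reductions

variable {R : Type*} [CommRing R] {s d : ℕ} {I : Fin s → Ideal R}

/-- The ideal `J = (y₁,…,y_d)` of a complete reduction datum, where `y_j = x_{1j}⋯x_{sj}`. -/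
def crIdeal (x : Fin s → Fin d → R) : Ideal R :=
  Ideal.span (Set.range fun j => ∏ i, x i j)

/-- `A = {x_{ij} ∈ I_i}` is a complete reduction of `F`: `J·F(n) = F(n+e)` for all large `n`. -/
def IsCompleteReduction (F : AdmissibleFiltration R s I) (x : Fin s → Fin d → R) : Prop :=
  (∀ i j, x i j ∈ I i) ∧
  ∃ N : ℕ, ∀ n : Fin s → ℤ, (∀ i, (N : ℤ) ≤ n i) →
    crIdeal x * F.F n = F.F (n + evec s)

/-- A good complete reduction: in addition `F(m) ∩ (y₁) = y₁ F(m−e)` for all large `m`. -/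
def IsGoodCompleteReduction (F : AdmissibleFiltration R s I) (x : Fin s → Fin d → R) : Prop :=
  IsCompleteReduction F x ∧
  ∀ h : 0 < d, ∃ N : ℕ, ∀ m : Fin s → ℤ, (∀ i, (N : ℤ) ≤ m i) →
    F.F m ⊓ Ideal.span {∏ i, x i ⟨0, h⟩} =
      Ideal.span {∏ i, x i ⟨0, h⟩} * F.F (m - evec s)

end Reductions

/-- The first difference operator `Δ¹ f (n) = f(n+e) − f(n)`; `Δ^k` is its `k`-th iterate. -/
def deltaOp {s : ℕ} (f : (Fin s → ℤ) → ℤ) : (Fin s → ℤ) → ℤ :=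
  fun n => f (n + evec s) - f n

/-- The Ratliff–Rush closure filtration `F̆(n) = ⋃_{k ≥ 1} (F(n+ke) : F(e)^k)`. -/
def ratliffRush {R : Type*} [CommRing R] {s : ℕ} {I : Fin s → Ideal R}
    (F : AdmissibleFiltration R s I) (n : Fin s → ℤ) : Ideal R :=
  ⨆ k : ℕ, (F.F (n + ((k + 1) : ℕ) • evec s)).colon ((F.F (evec s) ^ (k + 1) : Ideal R) : Set R)

/-- Vanishing of `H¹_{R₊₊}(R(F))_n` for all `n ∈ ℕˢ`.  By Proposition 4.1 of the paper
(see STATEMENT 9), the degree-`n` component of this local cohomology module is isomorphic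
to `F̆(n)/F(n)`, so its vanishing for all `n ≥ 0` is the statement that the Ratliff–Rush
closure filtration agrees with `F` in all nonnegative degrees. -/
def H1ReesVanishes {R : Type*} [CommRing R] {s : ℕ} {I : Fin s → Ideal R}
    (F : AdmissibleFiltration R s I) : Prop :=
  ∀ n : Fin s → ℤ, 0 ≤ n → ratliffRush F n = F.F n

/-!
On the diagonal `n = (n, …, n)` one has `I₁ⁿ ⋯ I_sⁿ = (I₁ ⋯ I_s)ⁿ`, so there the multigraded
Hilbert polynomial agrees with the Samuel polynomial of `I₁ ⋯ I_s` for all large `n`, and hence the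
two are equal as polynomials in one variable. Since `binom(X+k-1, k)` has leading term `X^k/k!` and
vanishes at `0` unless `k = 0`, comparing `d!` times the coefficients of `X^d` gives the formula for
`e₀`, and comparing the values at `0` gives the formula for `e_d`.
-/

section

open Polynomial Filter
open scoped Nat

/-- The polynomial `binom(X+k-1, k)`, from which the Hilbert and Samuel polynomials are built.
It has this meaning in characteristic `0`; otherwise `k!` may be `0`, with junk inverse `0`. -/
noncomputable def multichoosePoly (F : Type*) [Field F] (k : ℕ) : F[X] :=
  preHilbertPoly F k 1

section MultichoosePoly

variable (F : Type*) [Field F]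

lemma eval_multichoosePoly (k : ℕ) (x : F) :
    (multichoosePoly F k).eval x = (k ! : F)⁻¹ * (ascPochhammer F k).eval x := by
  simp [multichoosePoly, preHilbertPoly]

lemma eval_zero_multichoosePoly (k : ℕ) :
    (multichoosePoly F k).eval 0 = if k = 0 then 1 else 0 := by
  rw [eval_multichoosePoly, ascPochhammer_eval_zero]
  split_ifs with hk <;> simp [hk]

variable [CharZero F]

lemma eval_intCast_multichoosePoly (k : ℕ) (n : ℤ) :
    (multichoosePoly F k).eval (n : F) = (Ring.choose (n + k - 1) k : ℤ) := by
  have hasc : (k ! : ℤ) * Ring.multichoose n k = (ascPochhammer ℤ k).eval n := by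
    rw [← nsmul_eq_mul, Ring.factorial_nsmul_multichoose_eq_ascPochhammer,
      ascPochhammer_smeval_eq_eval]
  have hfac : (k ! : F) ≠ 0 := Nat.cast_ne_zero.mpr k.factorial_ne_zero
  rw [eval_multichoosePoly, ← Ring.multichoose_eq, inv_mul_eq_iff_eq_mul₀ hfac,
    ← ascPochhammer_map (Int.castRingHom F), eval_intCast_map, Int.cast_id, ← hasc, map_mul,
    map_natCast, eq_intCast]

variable {ι : Type*} (t : Finset ι) (a : ι → ℕ)

lemma leadingCoeff_prod_multichoosePoly :
    (∏ i ∈ t, multichoosePoly F (a i)).leadingCoeff = (∏ i ∈ t, ((a i)! : F))⁻¹ := by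
  simp only [leadingCoeff_prod, multichoosePoly, leadingCoeff_preHilbertPoly, prod_inv_distrib]

lemma natDegree_prod_multichoosePoly :
    (∏ i ∈ t, multichoosePoly F (a i)).natDegree = ∑ i ∈ t, a i := by
  have hne : ∏ i ∈ t, (multichoosePoly F (a i)).leadingCoeff ≠ 0 := by
    simp [multichoosePoly, leadingCoeff_preHilbertPoly, prod_ne_zero_iff, Nat.factorial_ne_zero]
  rw [natDegree_prod' _ _ hne]
  simp only [multichoosePoly, natDegree_preHilbertPoly]

variable {t a} in
lemma factorial_mul_coeff_prod_multichoosePoly {d : ℕ} (h : ∑ i ∈ t, a i ≤ d) :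
    (d ! : F) * (∏ i ∈ t, multichoosePoly F (a i)).coeff d =
      if ∑ i ∈ t, a i = d then (Nat.multinomial t a : F) else 0 := by
  split_ifs with hd
  · have hprod : ∏ i ∈ t, ((a i)! : F) ≠ 0 :=
      prod_ne_zero_iff.mpr fun i _ => Nat.cast_ne_zero.mpr (a i).factorial_ne_zero
    rw [← hd, ← Nat.multinomial_spec, ← natDegree_prod_multichoosePoly F, coeff_natDegree,
      leadingCoeff_prod_multichoosePoly]
    push_cast
    field_simp
  · rw [coeff_eq_zero_of_natDegree_lt, mul_zero]
    rw [natDegree_prod_multichoosePoly]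
    lia

lemma factorial_mul_coeff_multichoosePoly {k d : ℕ} (h : k ≤ d) :
    (d ! : F) * (multichoosePoly F k).coeff d = if k = d then 1 else 0 := by
  simpa using factorial_mul_coeff_prod_multichoosePoly F (t := {k}) (a := id) (by simpa using h)

end MultichoosePoly

section DiagHilbPolynomial

variable (s d : ℕ) (c : (Fin s → ℕ) → ℤ)

/-- The restriction `P(X, …, X)` of the multigraded Hilbert polynomial `hilbPoly s d c` to the
diagonal, as a polynomial in one variable. -/
noncomputable def diagHilbPolynomial : ℚ[X] :=
  ∑ α : Fin s → Fin (d + 1) with ∑ i, (α i : ℕ) ≤ d,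
    C ((-1) ^ (d - ∑ i, (α i : ℕ)) * (c fun i => α i : ℚ)) * ∏ i, multichoosePoly ℚ (α i)

lemma eval_intCast_diagHilbPolynomial (n : ℤ) :
    (diagHilbPolynomial s d c).eval (n : ℚ) = hilbPoly s d c fun _ => n := by
  simp only [diagHilbPolynomial, hilbPoly, eval_finsetSum, eval_mul, eval_C, eval_prod,
    eval_intCast_multichoosePoly]
  norm_cast

lemma eval_zero_diagHilbPolynomial :
    (diagHilbPolynomial s d c).eval 0 = (-1) ^ d * c fun _ => 0 := by
  simp only [diagHilbPolynomial, eval_finsetSum, eval_mul, eval_C, eval_prod,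
    eval_zero_multichoosePoly]
  rw [sum_eq_single 0]
  · simp
  · intro α _ hα
    obtain ⟨i, hi⟩ := Function.ne_iff.mp hα
    rw [prod_eq_zero (mem_univ i) (if_neg (Fin.val_ne_of_ne hi)), mul_zero]
  · simp

lemma factorial_mul_coeff_diagHilbPolynomial :
    (d ! : ℚ) * (diagHilbPolynomial s d c).coeff d =
      ∑ α : Fin s → Fin (d + 1) with ∑ i, (α i : ℕ) = d,
        (Nat.multinomial univ fun i => (α i : ℕ) : ℚ) * c fun i => α i := by
  simp only [diagHilbPolynomial, finsetSum_coeff, coeff_C_mul, mul_sum]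
  have hterm (α : Fin s → Fin (d + 1)) (hα : ∑ i, (α i : ℕ) ≤ d) :
      (d ! : ℚ) * ((-1) ^ (d - ∑ i, (α i : ℕ)) * (c fun i => α i) *
          (∏ i, multichoosePoly ℚ (α i)).coeff d) =
        if ∑ i, (α i : ℕ) = d then
          (Nat.multinomial univ fun i => (α i : ℕ) : ℚ) * c fun i => α i else 0 := by
    rw [mul_left_comm, factorial_mul_coeff_prod_multichoosePoly ℚ hα]
    split_ifs with h
    · rw [h, Nat.sub_self, pow_zero, one_mul, mul_comm]
    · exact mul_zero _
  rw [sum_congr rfl fun α hα => hterm α (mem_filter.mp hα).2, ← sum_filter, filter_filter]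
  congr! 3 with α
  exact and_iff_right_of_imp le_of_eq

end DiagHilbPolynomial

section SamuelPolynomial

variable (d : ℕ) (b : ℕ → ℤ)

/-- The Samuel polynomial `samuelPoly d b` as a polynomial in one variable. -/
noncomputable def samuelPolynomial : ℚ[X] :=
  ∑ i ∈ range (d + 1), C ((-1) ^ i * (b i : ℚ)) * multichoosePoly ℚ (d - i)

lemma eval_intCast_samuelPolynomial (n : ℤ) :
    (samuelPolynomial d b).eval (n : ℚ) = samuelPoly d b n := by
  simp only [samuelPolynomial, samuelPoly, eval_finsetSum, eval_mul, eval_C,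
    eval_intCast_multichoosePoly]
  push_cast
  refine sum_congr rfl fun i hi => ?_
  rw [Nat.cast_sub (mem_range_succ_iff.mp hi), add_sub_assoc', sub_right_comm]

lemma eval_zero_samuelPolynomial : (samuelPolynomial d b).eval 0 = (-1) ^ d * b d := by
  simp only [samuelPolynomial, eval_finsetSum, eval_mul, eval_C, eval_zero_multichoosePoly]
  rw [sum_range_succ, sum_eq_zero]
  · simp
  · intro i hi
    rw [if_neg (Nat.sub_ne_zero_of_lt (mem_range.mp hi)), mul_zero]

lemma factorial_mul_coeff_samuelPolynomial :
    (d ! : ℚ) * (samuelPolynomial d b).coeff d = b 0 := by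
  simp only [samuelPolynomial, finsetSum_coeff, coeff_C_mul, mul_sum, mul_left_comm (d ! : ℚ),
    factorial_mul_coeff_multichoosePoly ℚ (Nat.sub_le d _)]
  rw [sum_range_succ', sum_eq_zero]
  · simp
  · intro i hi
    rw [if_neg (by have := mem_range.mp hi; lia), mul_zero]

end SamuelPolynomial

lemma diagHilbPolynomial_eq_samuelPolynomial {s d : ℕ} {c : (Fin s → ℕ) → ℤ} {b : ℕ → ℤ}
    (h : ∃ᶠ n : ℕ in atTop, hilbPoly s d c (fun _ => n) = samuelPoly d b n) :
    diagHilbPolynomial s d c = samuelPolynomial d b := by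
  have hinf := (Nat.frequently_atTop_iff_infinite.mp h).image (Nat.cast_injective (R := ℚ)).injOn
  refine eq_of_infinite_eval_eq _ _ (hinf.mono ?_)
  rintro _ ⟨n, hn, rfl⟩
  have hdiag := eval_intCast_diagHilbPolynomial s d c n
  rw [hn, ← eval_intCast_samuelPolynomial] at hdiag
  exact_mod_cast hdiag

lemma prodPow_const {R : Type*} [CommRing R] {s : ℕ} (I : Fin s → Ideal R) (n : ℕ) :
    prodPow I (fun _ => n) = (∏ i, I i) ^ n := by
  simp only [prodPow, Int.toNat_natCast, prod_pow]

/-- Only the values at products of powers of the `I i` matter, so the colength `J ↦ λ(R/J)` is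
replaced by an arbitrary function `H` on ideals, such as `J ↦ λ(M/JM)`. -/
theorem multigraded_coeffs_vs_product_ideal_general {R : Type*} [CommRing R] (H : Ideal R → ℤ)
    {d s : ℕ} (I : Fin s → Ideal R) (c : (Fin s → ℕ) → ℤ)
    (hc : ∃ N : ℕ, ∀ n : Fin s → ℤ, (∀ i, (N : ℤ) ≤ n i) → hilbPoly s d c n = H (prodPow I n))
    (b : ℕ → ℤ) (hb : ∃ N : ℕ, ∀ n : ℕ, N ≤ n → samuelPoly d b n = H ((∏ i, I i) ^ n)) :
    (∑ α : Fin s → Fin (d + 1) with ∑ i, (α i : ℕ) = d,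
        (Nat.multinomial univ (fun i => (α i : ℕ)) : ℤ) * c (fun i => α i)) = b 0
      ∧ c (fun _ => 0) = b d := by
  obtain ⟨N, hN⟩ := hc
  obtain ⟨M, hM⟩ := hb
  have hdiag : ∀ᶠ n : ℕ in atTop, hilbPoly s d c (fun _ => n) = samuelPoly d b n := by
    filter_upwards [eventually_ge_atTop N, eventually_ge_atTop M] with n hNn hMn
    rw [hN _ fun _ => Int.ofNat_le.mpr hNn, hM n hMn, prodPow_const]
  have hpoly := diagHilbPolynomial_eq_samuelPolynomial hdiag.frequently
  constructor
  · have hcoeff := factorial_mul_coeff_diagHilbPolynomial s d c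
    rw [hpoly, factorial_mul_coeff_samuelPolynomial] at hcoeff
    exact_mod_cast hcoeff.symm
  · have hzero := eval_zero_diagHilbPolynomial s d c
    rw [hpoly, eval_zero_samuelPolynomial] at hzero
    exact_mod_cast (mul_left_cancel₀ (pow_ne_zero d (neg_ne_zero.mpr one_ne_zero)) hzero).symm

end

/-- Let `(R,m)` be a Noetherian local ring of dimension `d ≥ 1`, let
`I₁,…,I_s` be `m`-primary ideals and set `I = I₁⋯I_s`.  Then
`Σ_{|α|=d} d!·e_α({Iⁿ})/(α₁!⋯α_s!) = e₀(I)` and `e_{(0,…,0)}({Iⁿ}) = e_d(I)`.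
Here `c` is the family of multigraded Hilbert coefficients of the filtration `{Iⁿ}`
and `b` is the family of Hilbert coefficients of `I = I₁⋯I_s`; the multinomial
coefficient `d!/(α₁!⋯α_s!)` is `Nat.multinomial`. -/
theorem multigraded_coeffs_vs_product_ideal
    (R : Type*) [CommRing R] [IsLocalRing R] [IsNoetherianRing R]
    (d s : ℕ) (hd : 1 ≤ d) (hdim : ringKrullDim R = d)
    (I : Fin s → Ideal R) (hI : ∀ i, IsMPrimary R (I i))
    (c : (Fin s → ℕ) → ℤ)
    (hc : ∃ N : ℕ, ∀ n : Fin s → ℤ, (∀ i, (N : ℤ) ≤ n i) →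
      hilbPoly s d c n = lenI R (R ⧸ prodPow I n))
    (b : ℕ → ℤ) (hb : IsSamuelCoeffs (∏ i, I i) d b) :
    (∑ α ∈ Finset.univ.filter (fun α : Fin s → Fin (d+1) => (∑ i, (α i : ℕ)) = d),
        (Nat.multinomial Finset.univ (fun i => (α i : ℕ)) : ℤ) * c (fun i => (α i : ℕ)))
      = b 0
    ∧ c (fun _ => 0) = b d :=
  multigraded_coeffs_vs_product_ideal_general (fun J => lenI R (R ⧸ J)) I c hc b hb
end

section
/- Let (R,m) be a Noetherian local ring of dimension d≥1 with depth R ≥ 1, let I_1,…,I_s be m-primary ideals of R, let F = {F(n)}_{n∈ℤ^s} be an I-admissible filtration of ideals in R, and let A = {x_{ij}∈I_i : j=1,…,d; i=1,…,s} be a complete reduction of F. Then for each i = 1,…,s, the ideal J_i = (x_{i1},…,x_{id}) is a reduction of I_i, that is, J_i I_i^n = I_i^{n+1} for some n∈ℕ. -/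
/-! Common definitions for multigraded filtrations of ideals
(following Sarkar–Verma, "Postulation and reduction vectors of
multigraded filtrations of ideals"). -/

open Finset IsLocalRing

/-! If multiplication by `z` maps a finitely generated ideal `M` into `b * M`, Cayley–Hamilton gives
a monic polynomial whose value at `z` annihilates `M` and whose `k`-th coefficient from the top lies
in `b ^ k`. When a power of `z` lies in `M`, multiplying by it makes `z` integral over `b`; so
`b ≤ a` is a reduction as soon as `a * M ≤ b * M` and `a ≤ √M`. For a complete reduction, in high
degrees `I_i F(n + e - e_i) ⊆ F(n + e) = J F(n) ⊆ J_i I ^ (e - e_i) F(n) ⊆ J_i F(n + e - e_i)`, and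
`M = F(n + e - e_i)` contains a product of powers of the `I_k`, each with `I_i` in its radical. -/

section IdealPowers

variable {R : Type*} [CommSemiring R] {a b c₁ c₂ : Ideal R}

theorem sup_pow_add_le_mul_pow_sup_mul_pow (m n : ℕ) :
    (c₁ ⊔ c₂) ^ (m + n) ≤ c₁ ^ m * (c₁ ⊔ c₂) ^ n ⊔ c₂ ^ n * (c₁ ⊔ c₂) ^ m := by
  have split_pow {c c' : Ideal R} {i j k l : ℕ} (hik : k ≤ i) (h : i + j = k + l) :
      c ^ i * c' ^ j ≤ c ^ k * (c ⊔ c') ^ l := by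
    obtain ⟨t, rfl⟩ := Nat.exists_eq_add_of_le hik
    obtain rfl : t + j = l := by omega
    rw [pow_add, pow_add, mul_assoc]
    gcongr
    exacts [le_sup_left, le_sup_right]
  rw [← Submodule.add_eq_sup, add_pow]
  refine Finset.sum_induction _ (· ≤ _) (fun _ _ ↦ sup_le) bot_le fun i hi ↦ ?_
  refine Ideal.mul_le_left.trans ?_
  have hi' : i ≤ m + n := Finset.mem_range_succ_iff.1 hi
  rcases le_total m i with hmi | him
  · exact (split_pow hmi (by omega)).trans le_sup_left
  · rw [mul_comm (c₁ ^ i), Submodule.add_eq_sup, sup_comm c₁ c₂]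
    exact (split_pow (k := n) (l := m) (by omega) (by omega)).trans le_sup_right

theorem sup_pow_le_mul_pow {n₁ n₂ : ℕ} (h₁ : c₁ ^ (n₁ + 1) ≤ b * a ^ n₁)
    (h₂ : c₂ ^ (n₂ + 1) ≤ b * a ^ n₂) (hc : c₁ ⊔ c₂ ≤ a) :
    (c₁ ⊔ c₂) ^ (n₁ + n₂ + 1 + 1) ≤ b * a ^ (n₁ + n₂ + 1) := by
  have mul_le {c : Ideal R} {k l : ℕ} (h : c ^ (k + 1) ≤ b * a ^ k) (hkl : k + l = n₁ + n₂) :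
      c ^ (k + 1) * (c₁ ⊔ c₂) ^ (l + 1) ≤ b * a ^ (n₁ + n₂ + 1) :=
    calc c ^ (k + 1) * (c₁ ⊔ c₂) ^ (l + 1) ≤ b * a ^ k * a ^ (l + 1) := by gcongr
      _ = b * a ^ (n₁ + n₂ + 1) := by rw [mul_assoc, ← pow_add, ← add_assoc, hkl]
  rw [show n₁ + n₂ + 1 + 1 = (n₁ + 1) + (n₂ + 1) by omega]
  exact (sup_pow_add_le_mul_pow_sup_mul_pow _ _).trans
    (sup_le (mul_le h₁ rfl) (mul_le h₂ (add_comm _ _)))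

theorem exists_pow_le_mul_pow_of_fg (ha : a.FG)
    (h : ∀ z ∈ a, ∃ n : ℕ, z ^ (n + 1) ∈ b * a ^ n) : ∃ n : ℕ, a ^ (n + 1) ≤ b * a ^ n := by
  suffices ∀ c : Ideal R, c.FG → c ≤ a → ∃ n : ℕ, c ^ (n + 1) ≤ b * a ^ n from this a ha le_rfl
  intro c hc hca
  induction c, hc using Submodule.fg_induction with
  | singleton z =>
    obtain ⟨n, hn⟩ := h z (hca (Submodule.mem_span_singleton_self z))
    refine ⟨n, ?_⟩
    rwa [← Ideal.span, Ideal.span_singleton_pow, Ideal.span_singleton_le_iff_mem]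
  | sup c₁ c₂ _ _ ih₁ ih₂ =>
    obtain ⟨n₁, h₁⟩ := ih₁ (le_sup_left.trans hca)
    obtain ⟨n₂, h₂⟩ := ih₂ (le_sup_right.trans hca)
    exact ⟨n₁ + n₂ + 1, sup_pow_le_mul_pow h₁ h₂ hca⟩

/-- The ideal `b` is a reduction of the ideal `a`; the inclusion `b ≤ a` is part of the notion, and
for finitely generated `a` the equality says that `a` is integral over `b`. -/
def IsReduction (b a : Ideal R) : Prop :=
  b ≤ a ∧ ∃ n : ℕ, b * a ^ n = a ^ (n + 1)

theorem isReduction_of_pow_le_mul_pow {n : ℕ} (hba : b ≤ a) (h : a ^ (n + 1) ≤ b * a ^ n) :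
    IsReduction b a :=
  ⟨hba, n, le_antisymm (by rw [pow_succ']; gcongr) h⟩

end IdealPowers

section DeterminantTrick

variable {R : Type*} [CommRing R] {a b : Ideal R} {z : R}

theorem eval_sub_pow_natDegree_mem_mul_pow {p : Polynomial R} (hp : p.Monic)
    (hcoeff : ∀ k, p.coeff k ∈ b ^ (p.natDegree - k)) (hba : b ≤ a) (hz : z ∈ a) :
    p.eval z - z ^ p.natDegree ∈ b * a ^ (p.natDegree - 1) := by
  rw [Polynomial.eval_eq_sum_range, Finset.sum_range_succ, hp.coeff_natDegree, one_mul,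
    add_sub_cancel_right]
  refine Ideal.sum_mem _ fun k hk ↦ ?_
  obtain ⟨l, hl⟩ := Nat.exists_eq_add_of_lt (Finset.mem_range.1 hk)
  have hck : p.coeff k ∈ b ^ (l + 1) := by
    simpa only [hl, show k + l + 1 - k = l + 1 by omega] using hcoeff k
  have hle : b ^ (l + 1) * a ^ k ≤ b * a ^ (p.natDegree - 1) :=
    calc b ^ (l + 1) * a ^ k = b * (b ^ l * a ^ k) := by rw [pow_succ', mul_assoc]
      _ ≤ b * (a ^ l * a ^ k) := by gcongr
      _ = b * a ^ (p.natDegree - 1) := by rw [← pow_add, hl, add_tsub_cancel_right, add_comm]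
  exact hle (Ideal.mul_mem_mul hck (Ideal.pow_mem_pow hz k))

theorem exists_pow_sub_mem_annihilator {M : Type*} [AddCommGroup M] [Module R M] [Module.Finite R M]
    (hba : b ≤ a) (hz : z ∈ a) (hzM : ∀ m : M, z • m ∈ b • (⊤ : Submodule R M)) :
    ∃ n : ℕ, ∃ y ∈ b * a ^ n, z ^ (n + 1) - y ∈ Module.annihilator R M := by
  have hrange : LinearMap.range (algebraMap R (Module.End R M) z) ≤ b • ⊤ := by
    rintro _ ⟨m, rfl⟩
    exact hzM m
  obtain ⟨p, hp, -, hcoeff, haeval⟩ :=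
    LinearMap.exists_monic_and_natDegree_eq_and_coeff_mem_pow_and_aeval_eq_zero R _ b hrange
  have hpz : p.eval z ∈ Module.annihilator R M := by
    rw [Polynomial.aeval_algebraMap_apply, Polynomial.coe_aeval_eq_eval] at haeval
    exact Module.mem_annihilator.2 fun m ↦ LinearMap.congr_fun haeval m
  refine ⟨p.natDegree, -((p.eval z - z ^ p.natDegree) * z), neg_mem ?_, ?_⟩
  · -- The extra factor `z` absorbs the truncation in `p.natDegree - 1` when `p = 1`.
    have hle : b * a ^ (p.natDegree - 1) * a ≤ b * a ^ p.natDegree := by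
      rw [mul_assoc, ← pow_succ]
      exact Ideal.mul_mono_right (Ideal.pow_le_pow_right (by omega))
    exact hle (Ideal.mul_mem_mul (eval_sub_pow_natDegree_mem_mul_pow hp hcoeff hba hz) hz)
  · convert Ideal.mul_mem_right z _ hpz using 1
    ring

theorem exists_pow_mem_mul_pow_of_mem_radical {M : Ideal R} (hM : M.FG) (hba : b ≤ a)
    (hz : z ∈ a) (hzM : z ∈ M.radical) (hmul : a * M ≤ b * M) :
    ∃ n : ℕ, z ^ (n + 1) ∈ b * a ^ n := by
  have : Module.Finite R M := Module.Finite.iff_fg.2 hM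
  have hsmul (m : M) : z • m ∈ b • (⊤ : Submodule R M) :=
    (Submodule.mem_smul_top_iff b M _).2 (hmul (Ideal.mul_mem_mul hz m.2))
  obtain ⟨n, y, hy, hann⟩ := exists_pow_sub_mem_annihilator hba hz hsmul
  obtain ⟨e, he⟩ := hzM
  have hpow : z ^ (n + e + 1) = y * z ^ e := by
    have h : (z ^ (n + 1) - y) * z ^ e = 0 :=
      congrArg Subtype.val (Module.mem_annihilator.1 hann ⟨z ^ e, he⟩)
    linear_combination h
  refine ⟨n + e, ?_⟩
  rw [hpow, pow_add, ← mul_assoc]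
  exact Ideal.mul_mem_mul hy (Ideal.pow_mem_pow hz e)

theorem isReduction_of_mul_le_mul {M : Ideal R} (ha : a.FG) (hM : M.FG) (hba : b ≤ a)
    (haM : a ≤ M.radical) (hmul : a * M ≤ b * M) : IsReduction b a := by
  obtain ⟨n, hn⟩ := exists_pow_le_mul_pow_of_fg ha fun z hz ↦
    exists_pow_mem_mul_pow_of_mem_radical hM hba hz (haM hz) hmul
  exact isReduction_of_pow_le_mul_pow hba hn

end DeterminantTrick

section CompleteReductions

variable {R : Type*} [CommRing R] {s d : ℕ} {I : Fin s → Ideal R}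

theorem prodPow_single (I : Fin s → Ideal R) (i : Fin s) : prodPow I (Pi.single i 1) = I i := by
  rw [prodPow, Finset.prod_eq_single_of_mem i (Finset.mem_univ i) fun k _ hk ↦ by simp [hk]]
  simp

theorem prodPow_evec_sub_single (I : Fin s → Ideal R) (i : Fin s) :
    prodPow I (evec s - Pi.single i 1) = ∏ k ∈ univ.erase i, I k := by
  rw [prodPow, ← Finset.mul_prod_erase _ _ (Finset.mem_univ i)]
  have hi : (evec s - Pi.single i 1 : Fin s → ℤ) i = 0 := by simp [evec]
  rw [hi, Int.toNat_zero, pow_zero, one_mul]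
  refine Finset.prod_congr rfl fun k hk ↦ ?_
  simp [evec, Finset.ne_of_mem_erase hk]

theorem le_radical_prodPow {a : Ideal R} (h : ∀ k, a ≤ (I k).radical) (n : Fin s → ℤ) :
    a ≤ (prodPow I n).radical := by
  refine Finset.prod_induction _ (a ≤ Ideal.radical ·)
    (fun b c hb hc ↦ by rw [Ideal.radical_mul]; exact le_inf hb hc)
    (by simp [Ideal.radical_top]) fun k _ ↦ ?_
  rcases eq_or_ne (n k).toNat 0 with hk | hk
  · simp [hk, Ideal.radical_top]
  · exact (h k).trans_eq (Ideal.radical_pow _ hk).symm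

theorem crIdeal_le_span_mul_prodPow {x : Fin s → Fin d → R} (hx : ∀ i j, x i j ∈ I i)
    (i : Fin s) :
    crIdeal x ≤ Ideal.span (Set.range (x i)) * prodPow I (evec s - Pi.single i 1) := by
  rw [crIdeal, Ideal.span_le]
  rintro _ ⟨j, rfl⟩
  beta_reduce
  rw [prodPow_evec_sub_single, ← Finset.mul_prod_erase _ _ (Finset.mem_univ i)]
  exact Ideal.mul_mem_mul (Ideal.subset_span (Set.mem_range_self j))
    (Ideal.prod_mem_prod fun k _ ↦ hx k j)

theorem AdmissibleFiltration.prodPow_mul_le (F : AdmissibleFiltration R s I) (m n : Fin s → ℤ) :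
    prodPow I m * F.F n ≤ F.F (m + n) :=
  (Ideal.mul_mono_left (F.prodPow_le m)).trans (F.mul_le m n)

theorem IsCompleteReduction.exists_mul_le_span_mul {F : AdmissibleFiltration R s I}
    {x : Fin s → Fin d → R} (hx : IsCompleteReduction F x) (i : Fin s) :
    ∃ m : Fin s → ℤ, I i * F.F m ≤ Ideal.span (Set.range (x i)) * F.F m := by
  obtain ⟨hxI, N, hN⟩ := hx
  let n : Fin s → ℤ := fun _ ↦ N
  let v : Fin s → ℤ := evec s - Pi.single i 1
  refine ⟨v + n, ?_⟩
  calc I i * F.F (v + n) = prodPow I (Pi.single i 1) * F.F (v + n) := by rw [prodPow_single]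
    _ ≤ F.F (Pi.single i 1 + (v + n)) := F.prodPow_mul_le _ _
    _ = F.F (n + evec s) := by rw [← add_assoc, add_sub_cancel, add_comm]
    _ = crIdeal x * F.F n := (hN n fun _ ↦ le_rfl).symm
    _ ≤ Ideal.span (Set.range (x i)) * prodPow I v * F.F n :=
      Ideal.mul_mono_left (crIdeal_le_span_mul_prodPow hxI i)
    _ ≤ Ideal.span (Set.range (x i)) * F.F (v + n) := by
      rw [mul_assoc]
      exact Ideal.mul_mono_right (F.prodPow_mul_le v n)

theorem complete_reduction_gives_reductions_general [IsNoetherianRing R]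
    {F : AdmissibleFiltration R s I} {x : Fin s → Fin d → R} (hx : IsCompleteReduction F x)
    {i : Fin s} (hI : ∀ k, I i ≤ (I k).radical) :
    IsReduction (Ideal.span (Set.range (x i))) (I i) := by
  obtain ⟨m, hm⟩ := hx.exists_mul_le_span_mul i
  have hle : Ideal.span (Set.range (x i)) ≤ I i := Ideal.span_le.2 (Set.range_subset_iff.2 (hx.1 i))
  have hrad : I i ≤ (F.F m).radical :=
    (le_radical_prodPow hI m).trans (Ideal.radical_mono (F.prodPow_le m))
  exact isReduction_of_mul_le_mul (I i).fg_of_isNoetherianRing (F.F m).fg_of_isNoetherianRing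
    hle hrad hm

end CompleteReductions

/-- Let `(R,m)` be a Noetherian local ring of dimension `d ≥ 1` with
`depth R ≥ 1` (the maximal ideal contains a nonzerodivisor), `I₁,…,I_s` `m`-primary
ideals, `F` an `I`-admissible filtration, and `A = {x_{ij}}` a complete reduction of `F`.
Then for each `i`, the ideal `J_i = (x_{i1},…,x_{id})` is a reduction of `I_i`:
`J_i I_i^n = I_i^{n+1}` for some `n ∈ ℕ`. -/
theorem complete_reduction_gives_reductions
    (R : Type*) [CommRing R] [IsLocalRing R] [IsNoetherianRing R]
    (d s : ℕ) (hd : 1 ≤ d) (hdim : ringKrullDim R = d)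
    (hdepth : ∃ x ∈ maximalIdeal R, x ∈ nonZeroDivisors R)
    (I : Fin s → Ideal R) (hI : ∀ i, IsMPrimary R (I i))
    (F : AdmissibleFiltration R s I)
    (x : Fin s → Fin d → R) (hx : IsCompleteReduction F x) :
    ∀ i : Fin s, ∃ n : ℕ,
      Ideal.span (Set.range fun j => x i j) * (I i) ^ n = (I i) ^ (n + 1) := by
  intro i
  exact (complete_reduction_gives_reductions_general hx fun k ↦
    (IsLocalRing.le_maximalIdeal (hI i).1).trans (hI k).2).2
end

section
/- Let R = ⊕_{n∈ℕ^s} R_n be an ℕ^s-graded ring, S an ℕ^s-graded R-algebra, and b∈R_e where e = (1,…,1). Suppose that multiplication by b gives an injective map S_n → S_{n+e} for all sufficiently large n∈ℕ^s and that grade(S_{++}) ≥ 1, i.e. (0 :_S (S_{++})^k) = 0 for all k≥1. Then b is a nonzerodivisor on S. -/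
/-- The irrelevant ideal `S₊₊ = ⊕_{n ≥ (1,…,1)} S_n` of an `ℕˢ`-graded ring:
the ideal generated by the homogeneous elements of degree `≥ e = (1,…,1)`. -/
def plusPlusIdeal {s : ℕ} {B : Type*} [CommRing B] (ℬ : (Fin s → ℕ) → AddSubgroup B) :
    Ideal B :=
  Ideal.span {x : B | ∃ n : Fin s → ℕ, (∀ i, 1 ≤ n i) ∧ x ∈ ℬ n}

/-!
As `b` is homogeneous, so is the kernel `K` of multiplication by `b`. Degrees only grow under
multiplication, so `K · S_{≥ a}` is spanned by homogeneous elements of `K` of degree `≥ a`, and for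
`a = (N, …, N)` large these vanish by the injectivity assumption. Since
`(S₊₊)ᴺ ⊆ S_{≥ a}`, the ideal `K` annihilates `(S₊₊)ᴺ`. An ideal with zero annihilator has powers
with zero annihilator, hence `K = 0`.
-/

theorem annihilator_pow_eq_bot {B : Type*} [CommSemiring B] {I : Ideal B}
    (hI : I.annihilator = ⊥) (k : ℕ) : (I ^ k).annihilator = ⊥ := by
  induction k with
  | zero =>
    rw [pow_zero, Ideal.one_eq_top, ← le_bot_iff, ← hI]
    exact Submodule.annihilator_mono le_top
  | succ k ih =>
    refine eq_bot_iff.mpr fun x hx ↦ ih ▸ Submodule.mem_annihilator.mpr fun y hy ↦ ?_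
    have hxy : x * y ∈ I.annihilator := Submodule.mem_annihilator.mpr fun z hz ↦ by
      rw [smul_eq_mul, mul_assoc]
      exact Submodule.mem_annihilator.mp hx _ (pow_succ I k ▸ Ideal.mul_mem_mul hy hz)
    rwa [hI] at hxy

section Graded

variable {ι B σ : Type*} [CommSemiring B] [SetLike σ B]

/-- The truncation `B_{≥ a} = ⊕_{n ≥ a} B_n` of a graded ring, as an ideal. It is encoded as the
ideal generated by the homogeneous elements of degree `≥ a`, which agrees with the direct sum when
all degrees are nonnegative. -/
def truncationIdeal [LE ι] (ℬ : ι → σ) (a : ι) : Ideal B :=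
  Ideal.span {x | ∃ n, a ≤ n ∧ x ∈ ℬ n}

section Powers

variable [AddCommMonoid ι] [Preorder ι] (ℬ : ι → σ) [SetLike.GradedMonoid ℬ]

theorem truncationIdeal_zero : truncationIdeal ℬ 0 = ⊤ :=
  (Ideal.eq_top_iff_one _).mpr (Ideal.subset_span ⟨0, le_rfl, SetLike.one_mem_graded ℬ⟩)

variable [IsOrderedAddMonoid ι]

theorem truncationIdeal_mul_le (a b : ι) :
    truncationIdeal ℬ a * truncationIdeal ℬ b ≤ truncationIdeal ℬ (a + b) := by
  rw [truncationIdeal, truncationIdeal, Ideal.span_mul_span', Ideal.span_le]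
  rintro _ ⟨x, ⟨m, ham, hx⟩, y, ⟨n, hbn, hy⟩, rfl⟩
  exact Ideal.subset_span ⟨m + n, add_le_add ham hbn, SetLike.mul_mem_graded hx hy⟩

theorem truncationIdeal_pow_le (a : ι) (k : ℕ) :
    truncationIdeal ℬ a ^ k ≤ truncationIdeal ℬ (k • a) := by
  induction k with
  | zero => simp [truncationIdeal_zero]
  | succ k ih =>
    rw [pow_succ, succ_nsmul]
    exact (Ideal.mul_mono_left ih).trans (truncationIdeal_mul_le ℬ _ _)

end Powers

variable [DecidableEq ι] [AddSubmonoidClass σ B] {ℬ : ι → σ}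

theorem isHomogeneous_annihilator_span_singleton [AddRightCancelMonoid ι] [GradedRing ℬ]
    {d : ι} {c : B} (hc : c ∈ ℬ d) : (Ideal.span {c}).annihilator.IsHomogeneous ℬ := by
  intro n x hx
  rw [Submodule.mem_annihilator_span_singleton, smul_eq_mul] at hx ⊢
  rw [← DirectSum.coe_decompose_mul_add_of_right_mem ℬ hc, hx]
  simp

theorem le_annihilator_truncationIdeal [AddCommMonoid ι] [Preorder ι]
    [CanonicallyOrderedAdd ι] [GradedRing ℬ] {K : Ideal B} (hK : K.IsHomogeneous ℬ) {a : ι}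
    (hKa : ∀ n, a ≤ n → ∀ x ∈ ℬ n, x ∈ K → x = 0) :
    K ≤ (truncationIdeal ℬ a).annihilator := by
  intro x hx
  rw [truncationIdeal, Submodule.mem_annihilator_span]
  rintro ⟨y, n, han, hy⟩
  classical
  rw [smul_eq_mul, ← DirectSum.sum_support_decompose ℬ x, Finset.sum_mul]
  refine Finset.sum_eq_zero fun m _ ↦ hKa (m + n) (le_add_left han) _ ?_ ?_
  · exact SetLike.mul_mem_graded (SetLike.coe_mem _) hy
  · exact K.mul_mem_right _ (hK m hx)

section Ordered

variable [AddCancelCommMonoid ι] [PartialOrder ι] [IsOrderedAddMonoid ι]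
  [CanonicallyOrderedAdd ι] [GradedRing ℬ]

theorem eq_bot_of_isHomogeneous_of_eventually_zero {K : Ideal B}
    (hK : K.IsHomogeneous ℬ) {e : ι} {k : ℕ}
    (hKe : ∀ n, k • e ≤ n → ∀ x ∈ ℬ n, x ∈ K → x = 0)
    (hgrade : (truncationIdeal ℬ e).annihilator = ⊥) : K = ⊥ :=
  le_bot_iff.mp <| calc
    K ≤ (truncationIdeal ℬ (k • e)).annihilator := le_annihilator_truncationIdeal hK hKe
    _ ≤ (truncationIdeal ℬ e ^ k).annihilator :=
      Submodule.annihilator_mono (truncationIdeal_pow_le ℬ e k)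
    _ = ⊥ := annihilator_pow_eq_bot hgrade k

theorem nonzerodivisor_of_eventually_injective_general {d e : ι} {c : B} (hc : c ∈ ℬ d) {k : ℕ}
    (hinj : ∀ n, k • e ≤ n → ∀ x ∈ ℬ n, c * x = 0 → x = 0)
    (hgrade : (truncationIdeal ℬ e).annihilator = ⊥) : c ∈ nonZeroDivisors B := by
  have hker {x : B} : x ∈ (Ideal.span {c}).annihilator ↔ c * x = 0 := by
    rw [Submodule.mem_annihilator_span_singleton, smul_eq_mul, mul_comm]
  have hbot : (Ideal.span {c}).annihilator = ⊥ :=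
    eq_bot_of_isHomogeneous_of_eventually_zero (isHomogeneous_annihilator_span_singleton hc)
      (fun n hn x hxn hx ↦ hinj n hn x hxn (hker.mp hx)) hgrade
  exact mem_nonZeroDivisors_iff_left.mpr fun x hx ↦ by simpa [hbot] using hker.mpr hx

end Ordered

end Graded

theorem plusPlusIdeal_eq_truncationIdeal {s : ℕ} {B : Type*} [CommRing B]
    (ℬ : (Fin s → ℕ) → AddSubgroup B) : plusPlusIdeal ℬ = truncationIdeal ℬ 1 :=
  rfl

/-- Let `R = ⊕_{n∈ℕˢ} R_n` be an `ℕˢ`-graded ring, `S` an `ℕˢ`-graded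
`R`-algebra (a graded ring together with a degree-preserving ring homomorphism
`φ : R → S`), and `b ∈ R_e` where `e = (1,…,1)`.  Suppose multiplication by `b` gives
an injective map `S_n → S_{n+e}` for all sufficiently large `n ∈ ℕˢ` and that
`grade(S₊₊) ≥ 1`, i.e. `(0 :_S (S₊₊)^k) = 0` for all `k ≥ 1`.  Then `b` is a
nonzerodivisor on `S`. -/
theorem nonzerodivisor_of_eventually_injective
    (s : ℕ) (A B : Type*) [CommRing A] [CommRing B]
    (𝒜 : (Fin s → ℕ) → AddSubgroup A) (ℬ : (Fin s → ℕ) → AddSubgroup B)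
    [GradedRing 𝒜] [GradedRing ℬ]
    (φ : A →+* B) (hφ : ∀ n : Fin s → ℕ, ∀ a ∈ 𝒜 n, φ a ∈ ℬ n)
    (b : A) (hb : b ∈ 𝒜 (fun _ => 1))
    (hinj : ∃ N : ℕ, ∀ n : Fin s → ℕ, (∀ i, N ≤ n i) →
      ∀ x ∈ ℬ n, φ b * x = 0 → x = 0)
    (hgrade : ∀ k : ℕ, 1 ≤ k → ∀ x : B,
      (∀ y ∈ (plusPlusIdeal ℬ) ^ k, x * y = 0) → x = 0) :
    ∀ x : B, φ b * x = 0 → x = 0 := by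
  obtain ⟨N, hN⟩ := hinj
  have hann : (truncationIdeal ℬ 1).annihilator = ⊥ := by
    rw [← plusPlusIdeal_eq_truncationIdeal, ← pow_one (plusPlusIdeal ℬ), eq_bot_iff]
    exact fun x hx ↦ hgrade 1 le_rfl x (Submodule.mem_annihilator.mp hx)
  exact mem_nonZeroDivisors_iff_left.mp <|
    nonzerodivisor_of_eventually_injective_general (hφ _ b hb) (k := N)
      (fun n hn ↦ hN n fun i ↦ by simpa using hn i) hann
end
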